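/- Let (X,A,T,μ) be an invertible measure-preserving system on a Lebesgue probability space and let P_1 ≺ P_2 ≺ ⋯ ≺ P_k be finite measurable partitions, each refined by the next. Then: (a) H(P_1 | P_1^-) − H(P_1 | P_2^-) = H(P_2 | P_1 ∨ P_2^-) − H(P_2 | P_1^T ∨ P_2^-); and (b) H(P_1 | P_1^-) − H(P_1 | P_k^-) ≤ Σ_{i=1}^{k-1} ( H(P_i | P_i^-) − H(P_i | P_{i+1}^-) ). -/

import Mathlib

open MeasureTheory Filter Topology Set
open scoped symmDiff Classical ENNReal NNReal

section Defs

variable {X : Type*}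

/-- The pair `(x, y)` is (positively) asymptotic for `T`. -/
def IsAsymptoticPair [PseudoMetricSpace X] (T : X → X) (x y : X) : Prop :=
  Tendsto (fun n : ℕ => dist (T^[n] x) (T^[n] y)) atTop (𝓝 0)

/-- Shannon entropy of the finite measurable partition of `X` given by the fibers of a
map `p` into a finite type. -/
noncomputable def partEntropy [MeasurableSpace X] (μ : Measure X) {ι : Type*} [Fintype ι]
    (p : X → ι) : ℝ :=
  ∑ i : ι, Real.negMulLog (μ (p ⁻¹' {i})).toReal

/-- Conditional Shannon entropy `H(P | F)` of the finite partition given by the fibers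
of `p` with respect to the sub-σ-algebra `F`:
`H(P|F) = ∑_{A ∈ P} ∫ -E(1_A|F) log E(1_A|F) dμ`. -/
noncomputable def condPartEntropy [MeasurableSpace X] (μ : Measure X)
    (F : MeasurableSpace X) {ι : Type*} [Fintype ι] (p : X → ι) : ℝ :=
  ∑ i : ι, ∫ x, Real.negMulLog ((μ[(p ⁻¹' {i}).indicator (fun _ => (1 : ℝ)) | F]) x) ∂μ

/-- The σ-algebra `σ(P^-)` generated by the partitions `T^{-n}P`, `n ≥ 1`
(the "past" of the partition given by the fibers of `p`). -/
def partPast (T : X → X) {ι : Type*} (p : X → ι) : MeasurableSpace X :=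
  ⨆ n : ℕ, MeasurableSpace.comap (fun x => p (T^[n + 1] x)) ⊤

/-- The σ-algebra `σ(P^T)` generated by the partitions `T^{-n}P`, `n ∈ ℤ`, where `S = T⁻¹`. -/
def partHull (T S : X → X) {ι : Type*} (p : X → ι) : MeasurableSpace X :=
  ⨆ n : ℕ,
    MeasurableSpace.comap (fun x => p (T^[n] x)) ⊤ ⊔
      MeasurableSpace.comap (fun x => p (S^[n] x)) ⊤

/-- Kolmogorov–Sinai entropy of a finite partition: `h_μ(P, T) = H(P | P^-)`. -/
noncomputable def partKS [MeasurableSpace X] (μ : Measure X) (T : X → X) {ι : Type*}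
    [Fintype ι] (p : X → ι) : ℝ :=
  condPartEntropy μ (partPast T p) p

/-- Kolmogorov–Sinai (measure-theoretic) entropy `h_μ(X, T)` of the system:
the supremum over all finite measurable partitions `P` of `h_μ(P, T)`. -/
noncomputable def ksEntropy [MeasurableSpace X] (μ : Measure X) (T : X → X) : ℝ≥0∞ :=
  ⨆ (k : ℕ) (p : X → Fin k) (_ : Measurable p), ENNReal.ofReal (partKS μ T p)

/-- The Pinsker σ-algebra `Π_μ`: the σ-algebra generated by all finite measurable
partitions with zero Kolmogorov–Sinai entropy. -/
def pinskerAlg [MeasurableSpace X] (μ : Measure X) (T : X → X) : MeasurableSpace X :=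
  ⨆ (k : ℕ) (p : X → Fin k) (_ : Measurable p) (_ : partKS μ T p = 0),
    MeasurableSpace.comap p ⊤

/-- Minimal cardinality of a subcover of `⋁_{i=0}^{n-1} T^{-i} C`, where `C` is a
finite cover of `X`. -/
noncomputable def coverNum (T : X → X) {k : ℕ} (C : Fin k → Set X) (n : ℕ) : ℕ :=
  sInf {m : ℕ | ∃ f : Fin m → Fin n → Fin k,
    (⋃ j : Fin m, ⋂ i : Fin n, T^[(i : ℕ)] ⁻¹' C (f j i)) = Set.univ}

/-- Topological entropy of a finite cover `C`:
`h(C, T) = inf_n (1/n) log N(⋁_{i=0}^{n-1} T^{-i} C) = lim_n (1/n) log N(...)`. -/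
noncomputable def coverEntropyOf (T : X → X) {k : ℕ} (C : Fin k → Set X) : ℝ :=
  ⨅ n : ℕ, Real.log (coverNum T C (n + 1)) / (n + 1)

/-- `(x, y)` is a topological entropy pair: `x ≠ y` and every two-set open cover
`{Uᶜ, Vᶜ}`, where `U` and `V` are disjoint closed neighbourhoods of `x` and `y`,
has positive topological entropy. -/
def IsEntropyPair [TopologicalSpace X] (T : X → X) (x y : X) : Prop :=
  x ≠ y ∧ ∀ U V : Set X, IsClosed U → IsClosed V → U ∈ 𝓝 x → V ∈ 𝓝 y → Disjoint U V →
    0 < coverEntropyOf T ![Uᶜ, Vᶜ]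

/-- `(x, y)` is an entropy pair for the invariant measure `μ`: `x ≠ y` and every two-set
Borel partition `(A, Aᶜ)` with `x ∈ interior A` and `y ∈ interior Aᶜ` has positive
entropy with respect to `T` and `μ`. -/
def IsMuEntropyPair [TopologicalSpace X] [MeasurableSpace X] (T : X → X) (μ : Measure X)
    (x y : X) : Prop :=
  x ≠ y ∧ ∀ A : Set X, MeasurableSet A → x ∈ interior A → y ∈ interior Aᶜ →
    0 < partKS μ T (fun z => if z ∈ A then (0 : Fin 2) else 1)

/-- `ν` is the relatively independent square `μ ⊠_G μ` of `μ` over the sub-σ-algebra `G`: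
it is determined by `ν(A × B) = ∫ E(1_A|G) · E(1_B|G) dμ` for all Borel sets `A`, `B`. -/
def IsCondSquare (G : MeasurableSpace X) [m0 : MeasurableSpace X] (μ : Measure X)
    (ν : Measure (X × X)) : Prop :=
  ∀ A B : Set X, MeasurableSet[m0] A → MeasurableSet[m0] B →
    ν (A ×ˢ B) = ENNReal.ofReal
      (∫ x, (μ[A.indicator (fun _ => (1 : ℝ)) | G]) x *
            (μ[B.indicator (fun _ => (1 : ℝ)) | G]) x ∂μ)

/-- The σ-algebra `m₁` is contained in `m₂` modulo `μ`-null sets. -/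
def SubModNull [MeasurableSpace X] (μ : Measure X) (m₁ m₂ : MeasurableSpace X) : Prop :=
  ∀ A : Set X, MeasurableSet[m₁] A → ∃ B : Set X, MeasurableSet[m₂] B ∧ μ (A ∆ B) = 0

end Defs

section Defs2

variable {X : Type*}

/-- The σ-algebra `F^- = ⋁_{n ≥ 1} T^{-n} F`. -/
def pastAlg (T : X → X) (F : MeasurableSpace X) : MeasurableSpace X :=
  ⨆ n : ℕ, MeasurableSpace.comap (T^[n + 1]) F

/-- The σ-algebra `F^T = ⋁_{n ∈ ℤ} T^{-n} F`, where `S = T⁻¹`. -/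
def hullAlg (T S : X → X) (F : MeasurableSpace X) : MeasurableSpace X :=
  ⨆ n : ℕ, MeasurableSpace.comap (T^[n]) F ⊔ MeasurableSpace.comap (S^[n]) F

/-- `P` is (the σ-algebra of) an *excellent* measurable partition for `(X, μ, T)` (here
`S = T⁻¹`): it is generating (`σ(P^T) = 𝒜` mod `μ`) and it is generated by an increasing
sequence of finite measurable partitions `Pₙ ↑ P` with `H(Pₙ|Pₙ⁻) − H(Pₙ|P⁻) → 0`. -/
def IsExcellentPartition (P : MeasurableSpace X) [m0 : MeasurableSpace X] (μ : Measure X)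
    (T S : X → X) : Prop :=
  P ≤ m0 ∧ SubModNull μ m0 (hullAlg T S P) ∧
  ∃ (m : ℕ → ℕ) (Q : ∀ n : ℕ, X → Fin (m n)),
    (∀ n, Measurable (Q n)) ∧
    Monotone (fun n => MeasurableSpace.comap (Q n) (⊤ : MeasurableSpace (Fin (m n)))) ∧
    (⨆ n : ℕ, MeasurableSpace.comap (Q n) (⊤ : MeasurableSpace (Fin (m n)))) = P ∧
    Tendsto (fun n => condPartEntropy μ (partPast T (Q n)) (Q n) -
      condPartEntropy μ (pastAlg T P) (Q n)) atTop (𝓝 0)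

end Defs2

/-! Write `P^T` for the full itinerary algebra of `P`. When `Q` refines `P`, the heart of the matter
is Pinsker's formula `H(Q | Q⁻) = H(P | P⁻) + H(Q | P^T ∨ Q⁻)`.

For `≥`, split `H(Q₀ⁿ⁻¹) = H(P₀ⁿ⁻¹) + H(Q₀ⁿ⁻¹ | P₀ⁿ⁻¹)` and bound the two terms below by
`n H(P | P⁻)` and `n H(Q | P^T ∨ Q⁻)`, the second because `P^T` is invariant. The left side is the
sum of the `H(Q | Q₁ⁱ)` for `i < n`, so dividing by `n` gives the inequality in the limit. For `≤`,
split the joint entropy of `Q` and `P₋ₙ⁰` given `Q⁻` in both orders; stationarity leaves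
`H(Q | Q⁻) ≤ H(P | P⁻) + H(Q | P₋ₙ⁰ ∨ Q⁻)`, and Lévy's upward theorem lets `n → ∞`.

Subtracting the chain rule `H(Q | Q⁻) = H(P | Q⁻) + H(Q | P ∨ Q⁻)` gives (a). For (b), the entropy
drop `H(P | F) - H(P | G)` caused by enlarging `F` to `G` increases when `P` is refined, so the drop
of `P₁` from `Pᵢ⁻` to `Pᵢ₊₁⁻` is at most that of `Pᵢ`; these drops telescope. -/

lemma exists_eq_on_fibers_of_stronglyMeasurable_comap_sup {X ι : Type*}
    {F : MeasurableSpace X} {p : X → ι} {u : X → ℝ}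
    (hu : StronglyMeasurable[MeasurableSpace.comap p ⊤ ⊔ F] u) :
    ∃ v : ι → X → ℝ, (∀ i, StronglyMeasurable[F] (v i)) ∧ ∀ x, u x = v (p x) x := by
  have hcomap : MeasurableSpace.comap (fun x => (p x, x)) (MeasurableSpace.prod ⊤ F) =
      MeasurableSpace.comap p ⊤ ⊔ F := by
    rw [MeasurableSpace.comap_prodMk]; exact congrArg _ MeasurableSpace.comap_id
  rw [← hcomap] at hu
  obtain ⟨h, hh, rfl⟩ := hu.exists_eq_measurable_comp (mY := .prod ⊤ F)
  exact ⟨fun i x => h (i, x),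
    fun i => hh.comp_measurable (@measurable_prodMk_left _ _ ⊤ F i), fun _ => rfl⟩

section CondProb

open scoped ProbabilityTheory

variable {X : Type*} {F G : MeasurableSpace X} [m0 : MeasurableSpace X] {μ : Measure X}
  [IsFiniteMeasure μ] {s t : Set X}

lemma integrable_indicator_one (hs : MeasurableSet s) :
    Integrable (s.indicator fun _ => (1 : ℝ)) μ :=
  (integrable_const 1).indicator hs

lemma condExp_indicator_one_mem_Icc (hF : F ≤ m0) (hs : MeasurableSet s) :
    ∀ᵐ x ∂μ, (μ⟦s | F⟧) x ∈ Icc (0 : ℝ) 1 :=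
  Convex.condExp_mem hF (integrable_indicator_one hs) isClosed_Icc (convex_Icc 0 1) <|
    Eventually.of_forall fun x => by by_cases hx : x ∈ s <;> simp [hx]

lemma negMulLog_mem_Icc {x : ℝ} (hx : x ∈ Icc (0 : ℝ) 1) : Real.negMulLog x ∈ Icc (0 : ℝ) 1 :=
  ⟨Real.negMulLog_nonneg hx.1 hx.2,
    (Real.negMulLog_le_one_sub_self hx.1).trans (sub_le_self 1 hx.1)⟩

lemma integrable_negMulLog_condExp (hF : F ≤ m0) (hs : MeasurableSet s) :
    Integrable (fun x => Real.negMulLog ((μ⟦s | F⟧) x)) μ :=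
  .of_mem_Icc 0 1 (Real.continuous_negMulLog.comp_aestronglyMeasurable
      integrable_condExp.aestronglyMeasurable).aemeasurable
    ((condExp_indicator_one_mem_Icc hF hs).mono fun _ => negMulLog_mem_Icc)

lemma integral_negMulLog_condExp_anti (hFG : F ≤ G) (hG : G ≤ m0) (hs : MeasurableSet s) :
    ∫ x, Real.negMulLog ((μ⟦s | G⟧) x) ∂μ ≤ ∫ x, Real.negMulLog ((μ⟦s | F⟧) x) ∂μ := by
  have hF := hFG.trans hG
  have jensen := ConcaveOn.condExp_map_le (μ := μ) hF Real.concaveOn_negMulLog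
    (Real.continuous_negMulLog.upperSemicontinuous.upperSemicontinuousOn _)
    ((condExp_indicator_one_mem_Icc hG hs).mono fun x hx => hx.1) isClosed_Ici integrable_condExp
    (integrable_negMulLog_condExp hG hs)
  have tower : μ[μ⟦s | G⟧ | F] =ᵐ[μ] μ⟦s | F⟧ := condExp_condExp_of_le hFG hG
  rw [← integral_condExp hF]
  refine integral_mono_ae integrable_condExp (integrable_negMulLog_condExp hF hs) ?_
  filter_upwards [jensen, tower] with x hx htower
  rwa [Function.comp_apply, htower] at hx

lemma tendsto_integral_negMulLog_condExp {F : ℕ → MeasurableSpace X} (hmono : Monotone F)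
    (hF : ∀ n, F n ≤ m0) (hs : MeasurableSet s) :
    Tendsto (fun n => ∫ x, Real.negMulLog ((μ⟦s | F n⟧) x) ∂μ) atTop
      (𝓝 (∫ x, Real.negMulLog ((μ⟦s | ⨆ n, F n⟧) x) ∂μ)) := by
  refine tendsto_integral_of_dominated_convergence (fun _ => 1)
    (fun n => (integrable_negMulLog_condExp (hF n) hs).aestronglyMeasurable)
    (integrable_const 1) (fun n => ?_) ?_
  · filter_upwards [condExp_indicator_one_mem_Icc (hF n) hs] with x hx
    rw [Real.norm_of_nonneg (negMulLog_mem_Icc hx).1]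
    exact (negMulLog_mem_Icc hx).2
  · filter_upwards [tendsto_ae_condExp (ℱ := ⟨F, hmono, hF⟩) (s.indicator fun _ => (1 : ℝ))]
      with x hx
    exact (Real.continuous_negMulLog.tendsto _).comp hx

lemma condExp_comp_measurePreserving {Y : Type*} {F : MeasurableSpace Y} [mY : MeasurableSpace Y]
    {ν : Measure Y} [IsFiniteMeasure ν] (hF : F ≤ mY) {T : X → Y}
    (hT : MeasurePreserving T μ ν) {f : Y → ℝ} (hf : Integrable f ν) :
    μ[f ∘ T | MeasurableSpace.comap T F] =ᵐ[μ] ν[f | F] ∘ T := by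
  have setIntegral_comp {t : Set Y} (ht : MeasurableSet[F] t) {g : Y → ℝ} (hg : Integrable g ν) :
      ∫ x in T ⁻¹' t, (g ∘ T) x ∂μ = ∫ y in t, g y ∂ν := by
    have := setIntegral_map (hF _ ht) (hT.map_eq.symm ▸ hg.aestronglyMeasurable)
      hT.measurable.aemeasurable
    rwa [hT.map_eq, eq_comm] at this
  have hint := hT.integrable_comp_of_integrable (integrable_condExp (m := F) (f := f))
  refine (ae_eq_condExp_of_forall_setIntegral_eq
    ((MeasurableSpace.comap_mono hF).trans hT.measurable.comap_le)
    (hT.integrable_comp_of_integrable hf) (fun _ _ _ => hint.integrableOn) ?_ ?_).symm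
  · rintro _ ⟨t, ht, rfl⟩ -
    rw [setIntegral_comp ht integrable_condExp, setIntegral_comp ht hf,
      setIntegral_condExp hF hf ht]
  · exact (stronglyMeasurable_condExp.comp_measurable (comap_measurable T)).aestronglyMeasurable

lemma condExp_indicator_eq_mul (hFG : F ≤ G) (hG : G ≤ m0) (ht : MeasurableSet[G] t)
    {f v : X → ℝ} (hf : Integrable f μ) (hv : StronglyMeasurable[F] v)
    (hfv : EqOn (μ[f | G]) v t) :
    μ[t.indicator f | F] =ᵐ[μ] μ⟦t | F⟧ * v := by
  have hloc : μ[t.indicator f | G] =ᵐ[μ] (t.indicator fun _ => (1 : ℝ)) * v := by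
    filter_upwards [condExp_indicator hf ht] with x hx
    rw [hx]
    by_cases hxt : x ∈ t <;> simp [hxt, hfv _]
  have hint : Integrable ((t.indicator fun _ => (1 : ℝ)) * v) μ :=
    integrable_condExp.congr hloc
  calc μ[t.indicator f | F]
    _ =ᵐ[μ] μ[μ[t.indicator f | G] | F] := (condExp_condExp_of_le hFG hG).symm
    _ =ᵐ[μ] μ[(t.indicator fun _ => (1 : ℝ)) * v | F] := condExp_congr_ae hloc
    _ =ᵐ[μ] μ⟦t | F⟧ * v := condExp_mul_of_stronglyMeasurable_right hv hint
      (integrable_indicator_one (hG _ ht))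

end CondProb

section CondPartEntropy

open scoped ProbabilityTheory

variable {X ι κ ρ : Type*} [Fintype ι] [Fintype κ] [Fintype ρ] {F G : MeasurableSpace X}
  [m0 : MeasurableSpace X] {μ : Measure X} [IsFiniteMeasure μ] {p : X → ι} {q : X → κ}

omit [Fintype ι] in
lemma measurableSet_fiber (hp : Measurable[m0, ⊤] p) (i : ι) : MeasurableSet (p ⁻¹' {i}) :=
  hp trivial

lemma condPartEntropy_nonneg (hF : F ≤ m0) (hp : Measurable[m0, ⊤] p) :
    0 ≤ condPartEntropy μ F p :=
  Finset.sum_nonneg fun i _ => integral_nonneg_of_ae <|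
    (condExp_indicator_one_mem_Icc hF (measurableSet_fiber hp i)).mono
      fun _ hx => (negMulLog_mem_Icc hx).1

lemma condPartEntropy_anti (hFG : F ≤ G) (hG : G ≤ m0) (hp : Measurable[m0, ⊤] p) :
    condPartEntropy μ G p ≤ condPartEntropy μ F p :=
  Finset.sum_le_sum fun i _ => integral_negMulLog_condExp_anti hFG hG (measurableSet_fiber hp i)

lemma tendsto_condPartEntropy_iSup {F : ℕ → MeasurableSpace X} (hmono : Monotone F)
    (hF : ∀ n, F n ≤ m0) (hp : Measurable[m0, ⊤] p) :
    Tendsto (fun n => condPartEntropy μ (F n) p) atTop (𝓝 (condPartEntropy μ (⨆ n, F n) p)) :=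
  tendsto_finsetSum _ fun i _ =>
    tendsto_integral_negMulLog_condExp hmono hF (measurableSet_fiber hp i)

lemma condPartEntropy_comp_measurePreserving {Y : Type*} {F : MeasurableSpace Y}
    [mY : MeasurableSpace Y] {ν : Measure Y} [IsFiniteMeasure ν] (hF : F ≤ mY) {T : X → Y}
    (hT : MeasurePreserving T μ ν) {p : Y → ι} (hp : Measurable[mY, ⊤] p) :
    condPartEntropy μ (MeasurableSpace.comap T F) (p ∘ T) = condPartEntropy ν F p := by
  refine Finset.sum_congr rfl fun i _ => ?_
  have hs := measurableSet_fiber hp i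
  have hshift := condExp_comp_measurePreserving hF hT (integrable_indicator_one (μ := ν) hs)
  have hint := integrable_negMulLog_condExp (μ := ν) hF hs
  calc ∫ x, Real.negMulLog ((μ⟦p ∘ T ⁻¹' {i} | MeasurableSpace.comap T F⟧) x) ∂μ
    _ = ∫ x, Real.negMulLog ((ν⟦p ⁻¹' {i} | F⟧) (T x)) ∂μ :=
      integral_congr_ae (hshift.fun_comp Real.negMulLog)
    _ = ∫ y, Real.negMulLog ((ν⟦p ⁻¹' {i} | F⟧) y) ∂ν := by
      have := integral_map hT.measurable.aemeasurable
        (hT.map_eq.symm ▸ hint.aestronglyMeasurable)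
      rwa [hT.map_eq, eq_comm] at this

lemma condPartEntropy_eq_zero_of_measurable (hF : F ≤ m0) (hp : Measurable[F, ⊤] p) :
    condPartEntropy μ F p = 0 := by
  refine Finset.sum_eq_zero fun i _ => ?_
  have hs : MeasurableSet[F] (p ⁻¹' {i}) := hp trivial
  rw [condExp_of_stronglyMeasurable hF (stronglyMeasurable_const.indicator hs)
    (integrable_indicator_one (hF _ hs))]
  refine integral_eq_zero_of_ae (Eventually.of_forall fun x => ?_)
  by_cases hx : p x = i <;> simp [indicator, hx]

omit [Fintype ι] in
lemma condExp_fiber_inter {s : Set X} {v : ι → X → ℝ} (hFG : F ≤ G) (hG : G ≤ m0)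
    (hp : Measurable[G, ⊤] p) (hs : MeasurableSet s) (hv : ∀ i, StronglyMeasurable[F] (v i))
    (hsv : ∀ x, (μ⟦s | G⟧) x = v (p x) x) (i : ι) :
    μ⟦p ⁻¹' {i} ∩ s | F⟧ =ᵐ[μ] μ⟦p ⁻¹' {i} | F⟧ * v i := by
  rw [← indicator_indicator]
  exact condExp_indicator_eq_mul hFG hG (hp trivial) (integrable_indicator_one hs) (hv i)
    (by rintro x rfl; exact hsv x)

omit [Fintype ι] in
lemma condExp_indicator_negMulLog_condExp {s : Set X} {v : ι → X → ℝ} (hFG : F ≤ G) (hG : G ≤ m0)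
    (hp : Measurable[G, ⊤] p) (hs : MeasurableSet s) (hv : ∀ i, StronglyMeasurable[F] (v i))
    (hsv : ∀ x, (μ⟦s | G⟧) x = v (p x) x) (i : ι) :
    μ[(p ⁻¹' {i}).indicator fun x => Real.negMulLog ((μ⟦s | G⟧) x) | F] =ᵐ[μ]
      μ⟦p ⁻¹' {i} | F⟧ * (Real.negMulLog ∘ v i) := by
  have hη := integrable_negMulLog_condExp (μ := μ) hG hs
  refine condExp_indicator_eq_mul hFG hG (hp trivial) hη
    (Real.continuous_negMulLog.comp_stronglyMeasurable (hv i)) ?_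
  rw [condExp_of_stronglyMeasurable hG
    (Real.continuous_negMulLog.comp_stronglyMeasurable stronglyMeasurable_condExp) hη]
  rintro x rfl
  exact congrArg Real.negMulLog (hsv x)

lemma integral_negMulLog_condExp_eq_sum_fiber {s : Set X} {v : ι → X → ℝ} (hFG : F ≤ G)
    (hG : G ≤ m0) (hp : Measurable[G, ⊤] p) (hs : MeasurableSet s)
    (hv : ∀ i, StronglyMeasurable[F] (v i)) (hsv : ∀ x, (μ⟦s | G⟧) x = v (p x) x) :
    ∫ x, Real.negMulLog ((μ⟦s | G⟧) x) ∂μ =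
      ∑ i, ∫ x, (μ⟦p ⁻¹' {i} | F⟧ * (Real.negMulLog ∘ v i)) x ∂μ :=
  calc ∫ x, Real.negMulLog ((μ⟦s | G⟧) x) ∂μ
    _ = ∫ x, ∑ i, (p ⁻¹' {i}).indicator (fun x => Real.negMulLog ((μ⟦s | G⟧) x)) x ∂μ := by
      simp [indicator_apply]
    _ = ∑ i, ∫ x, (p ⁻¹' {i}).indicator (fun x => Real.negMulLog ((μ⟦s | G⟧) x)) x ∂μ :=
      integral_finsetSum _ fun i _ =>
        (integrable_negMulLog_condExp hG hs).indicator (hG _ (hp trivial))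
    _ = ∑ i, ∫ x, (μ⟦p ⁻¹' {i} | F⟧ * (Real.negMulLog ∘ v i)) x ∂μ :=
      Finset.sum_congr rfl fun i _ => by
        rw [← integral_condExp (hFG.trans hG)]
        exact integral_congr_ae (condExp_indicator_negMulLog_condExp hFG hG hp hs hv hsv i)

lemma sum_negMulLog_mul {a : ℝ} {v : κ → ℝ} (h : ∑ j, a * v j = a) :
    ∑ j, Real.negMulLog (a * v j) = Real.negMulLog a + ∑ j, a * Real.negMulLog (v j) := by
  have : ∑ j, v j * Real.negMulLog a = Real.negMulLog a :=
    calc ∑ j, v j * Real.negMulLog a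
      _ = -(∑ j, a * v j) * Real.log a := by
        rw [neg_mul, Finset.sum_mul, ← Finset.sum_neg_distrib]
        exact Finset.sum_congr rfl fun j _ => by rw [Real.negMulLog]; ring
      _ = Real.negMulLog a := by rw [h, Real.negMulLog]
  simp_rw [Real.negMulLog_mul, Finset.sum_add_distrib, this]

lemma sum_condExp_fiber_inter (hq : Measurable[m0, ⊤] q) {s : Set X} (hs : MeasurableSet s) :
    ∑ j, μ⟦s ∩ q ⁻¹' {j} | F⟧ =ᵐ[μ] μ⟦s | F⟧ := by
  refine (condExp_finsetSum (fun j _ =>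
    integrable_indicator_one (hs.inter (measurableSet_fiber hq j))) F).symm.trans ?_
  refine (condExp_congr_ae (Eventually.of_forall fun x => ?_))
  by_cases hx : x ∈ s <;> simp [indicator_apply, hx]

omit [Fintype ι] in
lemma sum_integral_negMulLog_condExp_fiber_inter {v : κ → ι → X → ℝ} (hFG : F ≤ G) (hG : G ≤ m0)
    (hp : Measurable[G, ⊤] p) (hq : Measurable[m0, ⊤] q)
    (hv : ∀ j i, StronglyMeasurable[F] (v j i))
    (hqv : ∀ j x, (μ⟦q ⁻¹' {j} | G⟧) x = v j (p x) x) (i : ι) :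
    ∑ j, ∫ x, Real.negMulLog ((μ⟦p ⁻¹' {i} ∩ q ⁻¹' {j} | F⟧) x) ∂μ =
      (∫ x, Real.negMulLog ((μ⟦p ⁻¹' {i} | F⟧) x) ∂μ) +
        ∑ j, ∫ x, (μ⟦p ⁻¹' {i} | F⟧ * (Real.negMulLog ∘ v j i)) x ∂μ := by
  have hF := hFG.trans hG
  have hpi : MeasurableSet (p ⁻¹' {i}) := hG _ (hp trivial)
  have hqs := measurableSet_fiber hq
  have hvint (j : κ) : Integrable (μ⟦p ⁻¹' {i} | F⟧ * (Real.negMulLog ∘ v j i)) μ :=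
    integrable_condExp.congr
      (condExp_indicator_negMulLog_condExp hFG hG hp (hqs j) (hv j) (hqv j) i)
  rw [← integral_finsetSum _ fun j _ => integrable_negMulLog_condExp hF (hpi.inter (hqs j)),
    ← integral_finsetSum _ fun j _ => hvint j,
    ← integral_add (integrable_negMulLog_condExp hF hpi)
      (integrable_finsetSum _ fun j _ => hvint j)]
  refine integral_congr_ae ?_
  filter_upwards [eventually_all.2 fun j =>
      condExp_fiber_inter hFG hG hp (hqs j) (hv j) (hqv j) i,
    sum_condExp_fiber_inter (F := F) hq hpi] with x hx hsum
  rw [Finset.sum_apply] at hsum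
  simp only [hx, Pi.mul_apply, Function.comp_apply] at hsum ⊢
  exact sum_negMulLog_mul hsum

lemma condPartEntropy_prodMk (hF : F ≤ m0) (hp : Measurable[m0, ⊤] p) (hq : Measurable[m0, ⊤] q) :
    condPartEntropy μ F (fun x => (p x, q x)) =
      condPartEntropy μ F p + condPartEntropy μ (MeasurableSpace.comap p ⊤ ⊔ F) q := by
  have hfiber (i : ι) (j : κ) :
      (fun x => (p x, q x)) ⁻¹' {(i, j)} = p ⁻¹' {i} ∩ q ⁻¹' {j} := by
    ext; simp
  have hG : MeasurableSpace.comap p ⊤ ⊔ F ≤ m0 := sup_le hp.comap_le hF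
  have hpG : Measurable[MeasurableSpace.comap p ⊤ ⊔ F, ⊤] p :=
    (comap_measurable p).mono le_sup_left le_rfl
  -- With `A` the `i`-th cell of `p` and `B` the `j`-th cell of `q`, `v j i` plays the role of
  -- `E(1_{A ∩ B} | F) / E(1_A | F)`, without dividing by zero.
  choose v hv hqv using fun j => exists_eq_on_fibers_of_stronglyMeasurable_comap_sup
    (p := p) (F := F) (u := μ⟦q ⁻¹' {j} | MeasurableSpace.comap p ⊤ ⊔ F⟧)
    stronglyMeasurable_condExp
  simp only [condPartEntropy, Fintype.sum_prod_type, hfiber,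
    sum_integral_negMulLog_condExp_fiber_inter le_sup_right hG hpG hq hv hqv,
    Finset.sum_add_distrib, fun j => integral_negMulLog_condExp_eq_sum_fiber le_sup_right hG hpG
      (measurableSet_fiber hq j) (hv j) (hqv j)]
  rw [Finset.sum_comm]

lemma condPartEntropy_add_comm (hF : F ≤ m0) (hp : Measurable[m0, ⊤] p)
    (hq : Measurable[m0, ⊤] q) :
    condPartEntropy μ F p + condPartEntropy μ (MeasurableSpace.comap p ⊤ ⊔ F) q =
      condPartEntropy μ F q + condPartEntropy μ (MeasurableSpace.comap q ⊤ ⊔ F) p := by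
  rw [← condPartEntropy_prodMk hF hp hq, ← condPartEntropy_prodMk hF hq hp]
  refine Fintype.sum_equiv (Equiv.prodComm ι κ) _ _ fun ⟨i, j⟩ => ?_
  have : (fun x => (q x, p x)) ⁻¹' {(j, i)} = (fun x => (p x, q x)) ⁻¹' {(i, j)} := by
    ext; simp [and_comm]
  rw [Equiv.prodComm_apply, Prod.swap_prod_mk, this]

lemma condPartEntropy_eq_add_of_comap_le (hF : F ≤ m0) (hp : Measurable[m0, ⊤] p)
    (hq : Measurable[m0, ⊤] q)
    (hpq : MeasurableSpace.comap p ⊤ ≤ MeasurableSpace.comap q ⊤ ⊔ F) :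
    condPartEntropy μ F q =
      condPartEntropy μ F p + condPartEntropy μ (MeasurableSpace.comap p ⊤ ⊔ F) q := by
  rw [condPartEntropy_add_comm hF hp hq, condPartEntropy_eq_zero_of_measurable
    (sup_le hq.comap_le hF) (measurable_iff_comap_le.2 hpq), add_zero]

lemma condPartEntropy_mono (hF : F ≤ m0) (hp : Measurable[m0, ⊤] p) (hq : Measurable[m0, ⊤] q)
    (hpq : MeasurableSpace.comap p ⊤ ≤ MeasurableSpace.comap q ⊤ ⊔ F) :
    condPartEntropy μ F p ≤ condPartEntropy μ F q := by
  rw [condPartEntropy_eq_add_of_comap_le hF hp hq hpq]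
  exact le_add_of_nonneg_right (condPartEntropy_nonneg (sup_le hp.comap_le hF) hq)

lemma condPartEntropy_congr (hF : F ≤ m0) (hp : Measurable[m0, ⊤] p) (hq : Measurable[m0, ⊤] q)
    (h : MeasurableSpace.comap p ⊤ ⊔ F = MeasurableSpace.comap q ⊤ ⊔ F) :
    condPartEntropy μ F p = condPartEntropy μ F q :=
  (condPartEntropy_mono hF hp hq (h ▸ le_sup_left)).antisymm
    (condPartEntropy_mono hF hq hp (h ▸ le_sup_left))

lemma condPartEntropy_eq_add_of_comap_eq_sup {r : X → ρ} (hF : F ≤ m0) (hp : Measurable[m0, ⊤] p)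
    (hq : Measurable[m0, ⊤] q) (hr : Measurable[m0, ⊤] r)
    (h : MeasurableSpace.comap r ⊤ = MeasurableSpace.comap p ⊤ ⊔ MeasurableSpace.comap q ⊤) :
    condPartEntropy μ F r =
      condPartEntropy μ F p + condPartEntropy μ (MeasurableSpace.comap p ⊤ ⊔ F) q := by
  rw [condPartEntropy_eq_add_of_comap_le hF hp hr (h ▸ le_sup_left.trans le_sup_left),
    condPartEntropy_congr (sup_le hp.comap_le hF) hr hq]
  rw [h, sup_comm (MeasurableSpace.comap p ⊤) (MeasurableSpace.comap q ⊤), sup_assoc,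
    ← sup_assoc _ _ F, sup_idem]

lemma condPartEntropy_sub_le_sub (hFG : F ≤ G) (hG : G ≤ m0) (hp : Measurable[m0, ⊤] p)
    (hq : Measurable[m0, ⊤] q) (hpq : MeasurableSpace.comap p ⊤ ≤ MeasurableSpace.comap q ⊤) :
    condPartEntropy μ F p - condPartEntropy μ G p ≤
      condPartEntropy μ F q - condPartEntropy μ G q := by
  have hF := hFG.trans hG
  rw [condPartEntropy_eq_add_of_comap_le hF hp hq (hpq.trans le_sup_left),
    condPartEntropy_eq_add_of_comap_le hG hp hq (hpq.trans le_sup_left), add_sub_add_comm]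
  exact le_add_of_nonneg_right <| sub_nonneg.2 <|
    condPartEntropy_anti (sup_le_sup_left hFG _) (sup_le hp.comap_le hG) hq

end CondPartEntropy

section Past

variable {X ι κ : Type*} {T : X → X} {p : X → ι} {q : X → κ}

lemma comap_comp_le_comap_comp {Y : Type*} (f : Y → X)
    (hpq : MeasurableSpace.comap p ⊤ ≤ MeasurableSpace.comap q ⊤) :
    MeasurableSpace.comap (fun x => p (f x)) ⊤ ≤ MeasurableSpace.comap (fun x => q (f x)) ⊤ := by
  have := MeasurableSpace.comap_mono (g := f) hpq
  rwa [MeasurableSpace.comap_comp, MeasurableSpace.comap_comp] at this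

lemma partPast_mono (hpq : MeasurableSpace.comap p ⊤ ≤ MeasurableSpace.comap q ⊤) :
    partPast T p ≤ partPast T q :=
  iSup_mono fun n => comap_comp_le_comap_comp T^[n + 1] hpq

lemma partPast_le [m0 : MeasurableSpace X] (hT : Measurable T) (hp : Measurable[m0, ⊤] p) :
    partPast T p ≤ m0 :=
  iSup_le fun n => (hp.comp (hT.iterate (n + 1))).comap_le

theorem condPartEntropy_partPast_sub_le_sum [m0 : MeasurableSpace X] {μ : Measure X}
    [IsFiniteMeasure μ] (hT : Measurable T) {n : ℕ} {ι : ℕ → Type*} [∀ i, Fintype (ι i)]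
    {p : ∀ i, X → ι i} (hp : ∀ i ≤ n, Measurable[m0, ⊤] (p i))
    (hpp : ∀ i < n, MeasurableSpace.comap (p i) ⊤ ≤ MeasurableSpace.comap (p (i + 1)) ⊤) :
    condPartEntropy μ (partPast T (p 0)) (p 0) - condPartEntropy μ (partPast T (p n)) (p 0) ≤
      ∑ i ∈ Finset.range n, (condPartEntropy μ (partPast T (p i)) (p i) -
        condPartEntropy μ (partPast T (p (i + 1))) (p i)) := by
  induction n with
  | zero => simp
  | succ n ih =>
    have hrefine (i : ℕ) (hi : i ≤ n) :
        MeasurableSpace.comap (p 0) ⊤ ≤ MeasurableSpace.comap (p i) ⊤ := by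
      induction i with
      | zero => exact le_rfl
      | succ i ih' => exact (ih' (by lia)).trans (hpp i (by lia))
    have hlast := condPartEntropy_sub_le_sub (μ := μ) (partPast_mono (hpp n n.lt_succ_self))
      (partPast_le hT (hp _ le_rfl)) (hp 0 (by lia)) (hp n (by lia)) (hrefine n le_rfl)
    rw [Finset.sum_range_succ]
    linarith [ih (fun i hi => hp i (by lia)) fun i hi => hpp i (by lia)]

end Past

section Itinerary

variable {X ι κ : Type*} {e : Equiv.Perm X} {p : X → ι} {q : X → κ}

/-- The σ-algebra `⋁_{i ∈ I} T^{-i}P` of the partition `P` into fibres of `p` observed at the times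
in `I`. The transformation is a permutation `e`, so that `e ^ i` makes sense for `i : ℤ`. -/
@[reducible]
def observedAlg (e : Equiv.Perm X) (p : X → ι) (I : Set ℤ) : MeasurableSpace X :=
  ⨆ i ∈ I, MeasurableSpace.comap (fun x => p ((e ^ i) x)) ⊤

/-- The finite partition `⋁_{i ∈ I} T^{-i}P`, encoded by the map sending `x` to its `P`-name over
the times in `I`. -/
def itinerary (e : Equiv.Perm X) (p : X → ι) (I : Finset ℤ) (x : X) : I → ι :=
  fun i => p ((e ^ (i : ℤ)) x)

lemma observedAlg_mono {I J : Set ℤ} (h : I ⊆ J) : observedAlg e p I ≤ observedAlg e p J :=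
  biSup_mono h

lemma observedAlg_union (I J : Set ℤ) :
    observedAlg e p (I ∪ J) = observedAlg e p I ⊔ observedAlg e p J :=
  iSup_union

lemma observedAlg_iUnion (I : ℕ → Set ℤ) :
    observedAlg e p (⋃ n, I n) = ⨆ n, observedAlg e p (I n) :=
  iSup_iUnion _ _

lemma observedAlg_singleton (i : ℤ) :
    observedAlg e p {i} = MeasurableSpace.comap (fun x => p ((e ^ i) x)) ⊤ :=
  iSup_singleton

lemma observedAlg_singleton_zero : observedAlg e p {0} = MeasurableSpace.comap p ⊤ :=
  observedAlg_singleton 0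

lemma observedAlg_refine (hpq : MeasurableSpace.comap p ⊤ ≤ MeasurableSpace.comap q ⊤)
    (I : Set ℤ) : observedAlg e p I ≤ observedAlg e q I :=
  iSup₂_mono fun i _ => comap_comp_le_comap_comp (⇑(e ^ i)) hpq

lemma observedAlg_le [m0 : MeasurableSpace X] (he : ∀ i : ℤ, Measurable (e ^ i))
    (hp : Measurable[m0, ⊤] p) (I : Set ℤ) : observedAlg e p I ≤ m0 :=
  iSup₂_le fun i _ => (hp.comp (he i)).comap_le

lemma comap_zpow_observedAlg (m : ℤ) (I : Set ℤ) :
    MeasurableSpace.comap (⇑(e ^ m)) (observedAlg e p I) =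
      observedAlg e p ((fun i => i + m) '' I) := by
  simp only [observedAlg, MeasurableSpace.comap_iSup, MeasurableSpace.comap_comp, iSup_image]
  refine iSup_congr fun i => iSup_congr fun _ =>
    congrArg (MeasurableSpace.comap · ⊤) (funext fun x => ?_)
  rw [zpow_add, Equiv.Perm.mul_apply, Function.comp_apply]

lemma comap_itinerary [Finite ι] (I : Finset ℤ) :
    MeasurableSpace.comap (itinerary e p I) ⊤ = observedAlg e p I := by
  let : MeasurableSpace ι := ⊤
  have hpi : (⊤ : MeasurableSpace (I → ι)) = MeasurableSpace.pi :=
    (top_unique fun _ _ => MeasurableSet.of_discrete).symm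
  rw [hpi, observedAlg, iSup_subtype']
  simp only [MeasurableSpace.pi, MeasurableSpace.comap_iSup, MeasurableSpace.comap_comp]
  rfl

lemma partPast_eq_observedAlg : partPast (⇑e) p = observedAlg e p (Ioi 0) := by
  refine le_antisymm (iSup_le fun n => ?_) (iSup₂_le fun i hi => ?_)
  · refine le_iSup₂_of_le ((n + 1 : ℕ) : ℤ) (mem_Ioi.2 (by lia)) ?_
    rw [Equiv.Perm.iterate_eq_pow, zpow_natCast]
  · obtain ⟨n, rfl⟩ := Int.eq_succ_of_zero_lt hi
    refine le_iSup_of_le n ?_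
    rw [Equiv.Perm.iterate_eq_pow, ← zpow_natCast, Nat.cast_succ]

lemma partHull_eq_observedAlg : partHull (⇑e) (⇑e.symm) p = observedAlg e p univ := by
  have hpos (n : ℕ) : (⇑e)^[n] = ⇑(e ^ (n : ℤ)) := by
    rw [Equiv.Perm.iterate_eq_pow, zpow_natCast]
  have hneg (n : ℕ) : (⇑e.symm)^[n] = ⇑(e ^ (-(n : ℤ))) := by
    rw [zpow_neg, zpow_natCast, ← inv_pow, ← Equiv.Perm.iterate_eq_pow, Equiv.Perm.inv_def]
  simp only [partHull, hpos, hneg]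
  refine le_antisymm (iSup_le fun n => sup_le ?_ ?_) (iSup₂_le fun i _ => ?_)
  · exact le_iSup₂_of_le (n : ℤ) (mem_univ _) le_rfl
  · exact le_iSup₂_of_le (-(n : ℤ)) (mem_univ _) le_rfl
  · obtain ⟨n, rfl | rfl⟩ := i.eq_nat_or_neg
    · exact le_iSup_of_le n le_sup_left
    · exact le_iSup_of_le n le_sup_right

lemma measurable_itinerary [Finite ι] [m0 : MeasurableSpace X] (he : ∀ i : ℤ, Measurable (e ^ i))
    (hp : Measurable[m0, ⊤] p) (I : Finset ℤ) : Measurable[m0, ⊤] (itinerary e p I) := by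
  rw [measurable_iff_comap_le, comap_itinerary]
  exact observedAlg_le he hp I

end Itinerary

section Pinsker

variable {X ι κ : Type*} [Fintype ι] [Fintype κ] {e : Equiv.Perm X} {p : X → ι} {q : X → κ}
  {F : MeasurableSpace X} [m0 : MeasurableSpace X] {μ : Measure X} [IsFiniteMeasure μ]

lemma condPartEntropy_itinerary_translate (he : ∀ i : ℤ, MeasurePreserving (e ^ i) μ μ)
    (hF : F ≤ m0) (hp : Measurable[m0, ⊤] p) {I J : Finset ℤ} {m : ℤ}
    (hJ : (J : Set ℤ) = (fun i => i + m) '' I) :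
    condPartEntropy μ (MeasurableSpace.comap (⇑(e ^ m)) F) (itinerary e p J) =
      condPartEntropy μ F (itinerary e p I) := by
  have hI := measurable_itinerary (fun i => (he i).measurable) hp I
  rw [← condPartEntropy_comp_measurePreserving hF (he m) hI]
  refine condPartEntropy_congr ((MeasurableSpace.comap_mono hF).trans (he m).measurable.comap_le)
    (measurable_itinerary (fun i => (he i).measurable) hp J) (hI.comp (he m).measurable) ?_
  rw [← MeasurableSpace.comap_comp, comap_itinerary, comap_itinerary, comap_zpow_observedAlg, hJ]

lemma condPartEntropy_itinerary_Ico (he : ∀ i : ℤ, MeasurePreserving (e ^ i) μ μ) (hF : F ≤ m0)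
    (hFe : MeasurableSpace.comap (⇑(e ^ (1 : ℤ))) F = F) (hp : Measurable[m0, ⊤] p) (n : ℕ) :
    condPartEntropy μ F (itinerary e p (Finset.Ico 0 n)) =
      ∑ i ∈ Finset.range n, condPartEntropy μ (observedAlg e p (Ioc 0 i) ⊔ F) p := by
  have hem (i : ℤ) := (he i).measurable
  induction n with
  | zero =>
    refine condPartEntropy_eq_zero_of_measurable hF (measurable_iff_comap_le.2 ?_)
    simp [comap_itinerary]
  | succ n ih =>
    have hshift : condPartEntropy μ F (itinerary e p (Finset.Ioc 0 (n : ℤ))) =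
        condPartEntropy μ F (itinerary e p (Finset.Ico 0 (n : ℤ))) := by
      conv_lhs => rw [← hFe]
      refine condPartEntropy_itinerary_translate he hF hp ?_
      ext i
      simp only [Finset.coe_Ioc, Finset.coe_Ico, mem_image, mem_Ioc, mem_Ico]
      exact ⟨fun h => ⟨i - 1, by lia⟩, by rintro ⟨j, hj, rfl⟩; lia⟩
    have hsplit : (Ico 0 ((n + 1 : ℕ) : ℤ)) = Ioc 0 (n : ℤ) ∪ {0} := by
      ext i; simp only [mem_Ico, mem_union, mem_Ioc, mem_singleton_iff]; lia
    rw [Finset.sum_range_succ, ← ih, ← hshift,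
      condPartEntropy_eq_add_of_comap_eq_sup hF (measurable_itinerary hem hp _) hp
        (measurable_itinerary hem hp (Finset.Ico 0 ((n + 1 : ℕ) : ℤ))), comap_itinerary,
      Finset.coe_Ioc]
    rw [comap_itinerary, comap_itinerary, Finset.coe_Ico, Finset.coe_Ioc, hsplit,
      observedAlg_union, observedAlg_singleton_zero]

lemma le_of_tendsto_of_mul_le_sum {a : ℕ → ℝ} {c l : ℝ} (ha : Tendsto a atTop (𝓝 l))
    (hc : ∀ n : ℕ, n * c ≤ ∑ i ∈ Finset.range n, a i) : c ≤ l := by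
  refine ge_of_tendsto ha.cesaro ((eventually_gt_atTop 0).mono fun n hn => ?_)
  rw [inv_mul_eq_div, le_div_iff₀' (by exact_mod_cast hn)]
  exact hc n

lemma tendsto_condPartEntropy_observedAlg_Ioc (he : ∀ i : ℤ, Measurable (e ^ i))
    (hp : Measurable[m0, ⊤] p) :
    Tendsto (fun n : ℕ => condPartEntropy μ (observedAlg e p (Ioc 0 n)) p) atTop
      (𝓝 (condPartEntropy μ (observedAlg e p (Ioi 0)) p)) := by
  have hunion : ⋃ n : ℕ, Ioc 0 (n : ℤ) = Ioi 0 := by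
    ext i; simp only [mem_iUnion, mem_Ioc, mem_Ioi]
    exact ⟨fun ⟨_, h⟩ => h.1, fun h => ⟨i.toNat, by lia⟩⟩
  rw [← hunion, observedAlg_iUnion]
  exact tendsto_condPartEntropy_iSup
    (fun m n hmn => observedAlg_mono (Ioc_subset_Ioc_right (by exact_mod_cast hmn)))
    (fun n => observedAlg_le he hp _) hp

lemma mul_condPartEntropy_le_itinerary_Ico (he : ∀ i : ℤ, MeasurePreserving (e ^ i) μ μ)
    (hF : F ≤ m0) (hFe : MeasurableSpace.comap (⇑(e ^ (1 : ℤ))) F = F) (hp : Measurable[m0, ⊤] p)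
    (n : ℕ) :
    n * condPartEntropy μ (observedAlg e p (Ioi 0) ⊔ F) p ≤
      condPartEntropy μ F (itinerary e p (Finset.Ico 0 n)) := by
  rw [condPartEntropy_itinerary_Ico he hF hFe hp, ← nsmul_eq_mul]
  conv_lhs => rw [← Finset.card_range n]
  exact Finset.card_nsmul_le_sum _ _ _ fun i _ => condPartEntropy_anti
    (sup_le_sup_right (observedAlg_mono Ioc_subset_Ioi_self) F)
    (sup_le (observedAlg_le (fun i => (he i).measurable) hp _) hF) hp

lemma add_condPartEntropy_observedAlg_le (he : ∀ i : ℤ, MeasurePreserving (e ^ i) μ μ)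
    (hp : Measurable[m0, ⊤] p) (hq : Measurable[m0, ⊤] q)
    (hpq : MeasurableSpace.comap p ⊤ ≤ MeasurableSpace.comap q ⊤) :
    condPartEntropy μ (observedAlg e p (Ioi 0)) p +
        condPartEntropy μ (observedAlg e p univ ⊔ observedAlg e q (Ioi 0)) q ≤
      condPartEntropy μ (observedAlg e q (Ioi 0)) q := by
  have hem (i : ℤ) := (he i).measurable
  have hpI := observedAlg_le hem hp
  have hblock_p := measurable_itinerary hem hp
  have hblock_q := measurable_itinerary hem hq
  have hinv : MeasurableSpace.comap (⇑(e ^ (1 : ℤ))) (observedAlg e p univ) =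
      observedAlg e p univ := by
    rw [comap_zpow_observedAlg, image_univ_of_surjective (add_right_surjective (1 : ℤ))]
  refine le_of_tendsto_of_mul_le_sum (tendsto_condPartEntropy_observedAlg_Ioc hem hq) fun n => ?_
  have hprod := condPartEntropy_eq_add_of_comap_le (μ := μ) bot_le (hblock_p (Finset.Ico 0 n))
    (hblock_q (Finset.Ico 0 n)) (by
      rw [comap_itinerary, comap_itinerary, sup_bot_eq]; exact observedAlg_refine hpq _)
  have hsum := condPartEntropy_itinerary_Ico he bot_le MeasurableSpace.comap_bot hq n
  have hp_le := mul_condPartEntropy_le_itinerary_Ico he bot_le MeasurableSpace.comap_bot hp n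
  have hq_le := mul_condPartEntropy_le_itinerary_Ico he (hpI univ) hinv hq n
  have hhull : condPartEntropy μ (observedAlg e p univ) (itinerary e q (Finset.Ico 0 n)) ≤
      condPartEntropy μ (observedAlg e p (Finset.Ico (0 : ℤ) n)) (itinerary e q (Finset.Ico 0 n)) :=
    condPartEntropy_anti (observedAlg_mono (subset_univ _)) (hpI _) (hblock_q _)
  simp only [sup_bot_eq, comap_itinerary] at hprod hsum hp_le
  rw [sup_comm] at hq_le
  rw [mul_add, ← hsum, hprod]
  exact add_le_add hp_le (hq_le.trans hhull)

lemma condPartEntropy_itinerary_Icc_le (he : ∀ i : ℤ, MeasurePreserving (e ^ i) μ μ)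
    (hF : F ≤ m0) (hpF : observedAlg e p (Ioi 0) ≤ F) (hp : Measurable[m0, ⊤] p) (n : ℕ) :
    condPartEntropy μ F (itinerary e p (Finset.Icc (-n) 0)) ≤
      condPartEntropy μ F (itinerary e p (Finset.Ioc (-n) 0)) +
        condPartEntropy μ (observedAlg e p (Ioi 0)) p := by
  have hem (i : ℤ) := (he i).measurable
  have hpI := observedAlg_le hem hp
  have hblock := measurable_itinerary hem hp
  have hpn : Measurable[m0, ⊤] (p ∘ ⇑(e ^ (-n : ℤ))) := hp.comp (hem _)
  have hsplit : MeasurableSpace.comap (itinerary e p (Finset.Icc (-n) 0)) ⊤ =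
      MeasurableSpace.comap (itinerary e p (Finset.Ioc (-n) 0)) ⊤ ⊔
        MeasurableSpace.comap (p ∘ ⇑(e ^ (-n : ℤ))) ⊤ := by
    rw [comap_itinerary, comap_itinerary, Finset.coe_Icc, Finset.coe_Ioc,
      ← Ioc_insert_left (by lia), ← union_singleton, observedAlg_union, observedAlg_singleton,
      Function.comp_def]
  have hpast : MeasurableSpace.comap (⇑(e ^ (-n : ℤ))) (observedAlg e p (Ioi 0)) ≤
      observedAlg e p (Ioc (-n) 0) ⊔ F :=
    calc MeasurableSpace.comap (⇑(e ^ (-n : ℤ))) (observedAlg e p (Ioi 0))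
      _ ≤ observedAlg e p (Ioc (-n) 0 ∪ Ioi 0) := by
        rw [comap_zpow_observedAlg]; exact observedAlg_mono (by simp)
      _ ≤ observedAlg e p (Ioc (-n) 0) ⊔ F := by
        rw [observedAlg_union]; exact sup_le_sup_left hpF _
  rw [condPartEntropy_eq_add_of_comap_eq_sup hF (hblock _) hpn (hblock _) hsplit,
    ← condPartEntropy_comp_measurePreserving (hpI _) (he (-n)) hp, comap_itinerary, Finset.coe_Ioc]
  gcongr
  exact condPartEntropy_anti hpast (sup_le (hpI _) hF) hpn

omit [Fintype κ] in
lemma condPartEntropy_itinerary_Ioc_le (he : ∀ i : ℤ, MeasurePreserving (e ^ i) μ μ)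
    (hp : Measurable[m0, ⊤] p) (hq : Measurable[m0, ⊤] q) (n : ℕ) :
    condPartEntropy μ (observedAlg e q (Ioi 0)) (itinerary e p (Finset.Ioc (-n) 0)) ≤
      condPartEntropy μ (MeasurableSpace.comap q ⊤ ⊔ observedAlg e q (Ioi 0))
        (itinerary e p (Finset.Icc (-n) 0)) := by
  have hem (i : ℤ) := (he i).measurable
  have hqI := observedAlg_le hem hq
  have hblock := measurable_itinerary hem hp
  have htranslate : ((Finset.Ico (-n : ℤ) 0 : Finset ℤ) : Set ℤ) =
      (fun i => i + -1) '' (Finset.Ioc (-n : ℤ) 0 : Finset ℤ) := by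
    ext i
    simp only [Finset.coe_Ioc, Finset.coe_Ico, mem_image, mem_Ioc, mem_Ico]
    exact ⟨fun h => ⟨i + 1, by lia⟩, by rintro ⟨j, hj, rfl⟩; lia⟩
  have hpresent : MeasurableSpace.comap (⇑(e ^ (-1 : ℤ))) (observedAlg e q (Ioi 0)) =
      MeasurableSpace.comap q ⊤ ⊔ observedAlg e q (Ioi 0) := by
    rw [comap_zpow_observedAlg, image_add_const_Ioi, ← observedAlg_singleton_zero (e := e),
      ← observedAlg_union, singleton_union, Ioi_insert]
    congr 1
  rw [← condPartEntropy_itinerary_translate he (hqI _) hp htranslate, hpresent]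
  have hF := sup_le hq.comap_le (hqI (Ioi 0))
  refine condPartEntropy_mono hF (hblock _) (hblock _) (le_sup_of_le_left ?_)
  rw [comap_itinerary, comap_itinerary]
  exact observedAlg_mono (by simpa using Ico_subset_Icc_self)

/-- Given the past of `q`, the joint entropy of `q` and of the `p`-name over `[-n, 0]` is split in
both orders. The `p`-name over `(-n, 0]` then cancels: by stationarity, its entropy given the past
of `q` is that of its shift to `[-n, 0)` given `q` and its past. -/
lemma condPartEntropy_observedAlg_le_add (he : ∀ i : ℤ, MeasurePreserving (e ^ i) μ μ)
    (hp : Measurable[m0, ⊤] p) (hq : Measurable[m0, ⊤] q)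
    (hpq : MeasurableSpace.comap p ⊤ ≤ MeasurableSpace.comap q ⊤) (n : ℕ) :
    condPartEntropy μ (observedAlg e q (Ioi 0)) q ≤
      condPartEntropy μ (observedAlg e p (Ioi 0)) p +
        condPartEntropy μ (observedAlg e p (Icc (-n) 0) ⊔ observedAlg e q (Ioi 0)) q := by
  have hem (i : ℤ) := (he i).measurable
  have hF := observedAlg_le hem hq (Ioi 0)
  have hcomm := condPartEntropy_add_comm (μ := μ) hF hq
    (measurable_itinerary hem hp (Finset.Icc (-n) 0))
  rw [comap_itinerary, Finset.coe_Icc] at hcomm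
  linarith [condPartEntropy_itinerary_Icc_le he hF (observedAlg_refine hpq _) hp n,
    condPartEntropy_itinerary_Ioc_le he hp hq n]

omit [Fintype ι] in
lemma tendsto_condPartEntropy_observedAlg_Icc (he : ∀ i : ℤ, Measurable (e ^ i))
    (hp : Measurable[m0, ⊤] p) (hq : Measurable[m0, ⊤] q) (hF : F ≤ m0) :
    Tendsto (fun n : ℕ => condPartEntropy μ (observedAlg e p (Icc (-n) 0) ⊔ F) q) atTop
      (𝓝 (condPartEntropy μ (observedAlg e p (Iic 0) ⊔ F) q)) := by
  have hunion : ⋃ n : ℕ, Icc (-n : ℤ) 0 = Iic 0 := by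
    ext i; simp only [mem_iUnion, mem_Icc, mem_Iic]
    exact ⟨fun ⟨_, h⟩ => h.2, fun h => ⟨i.natAbs, by lia⟩⟩
  rw [← hunion, observedAlg_iUnion, iSup_sup]
  exact tendsto_condPartEntropy_iSup (fun m n hmn => sup_le_sup_right
      (observedAlg_mono (Icc_subset_Icc_left (by lia))) F)
    (fun n => sup_le (observedAlg_le he hp _) hF) hq

theorem condPartEntropy_partPast_eq_add_partHull (he : ∀ i : ℤ, MeasurePreserving (e ^ i) μ μ)
    (hp : Measurable[m0, ⊤] p) (hq : Measurable[m0, ⊤] q)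
    (hpq : MeasurableSpace.comap p ⊤ ≤ MeasurableSpace.comap q ⊤) :
    condPartEntropy μ (partPast e q) q = condPartEntropy μ (partPast e p) p +
      condPartEntropy μ (partHull e e.symm p ⊔ partPast e q) q := by
  have hem (i : ℤ) := (he i).measurable
  have hhull : observedAlg e p univ ⊔ observedAlg e q (Ioi 0) =
      observedAlg e p (Iic 0) ⊔ observedAlg e q (Ioi 0) := by
    rw [← Iic_union_Ioi (a := 0), observedAlg_union, sup_assoc,
      sup_of_le_right (observedAlg_refine hpq _)]
  have hlim := (tendsto_condPartEntropy_observedAlg_Icc (μ := μ) hem hp hq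
    (observedAlg_le hem hq (Ioi 0))).const_add (condPartEntropy μ (observedAlg e p (Ioi 0)) p)
  simp only [partPast_eq_observedAlg, partHull_eq_observedAlg]
  refine le_antisymm ?_ (add_condPartEntropy_observedAlg_le he hp hq hpq)
  rw [hhull]
  exact ge_of_tendsto' hlim (condPartEntropy_observedAlg_le_add he hp hq hpq)

theorem condPartEntropy_partPast_sub_eq_sub (he : ∀ i : ℤ, MeasurePreserving (e ^ i) μ μ)
    (hp : Measurable[m0, ⊤] p) (hq : Measurable[m0, ⊤] q)
    (hpq : MeasurableSpace.comap p ⊤ ≤ MeasurableSpace.comap q ⊤) :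
    condPartEntropy μ (partPast e p) p - condPartEntropy μ (partPast e q) p =
      condPartEntropy μ (MeasurableSpace.comap p ⊤ ⊔ partPast e q) q -
        condPartEntropy μ (partHull e e.symm p ⊔ partPast e q) q := by
  have he1 : Measurable e := (he 1).measurable
  have hchain := condPartEntropy_eq_add_of_comap_le (μ := μ) (partPast_le he1 hq) hp hq
    (hpq.trans le_sup_left)
  linarith [condPartEntropy_partPast_eq_add_partHull he hp hq hpq]

end Pinsker

lemma measurePreserving_zpow {X : Type*} [MeasurableSpace X] {μ : Measure X} {T : X ≃ᵐ X}
    (hT : MeasurePreserving T μ μ) (i : ℤ) :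
    MeasurePreserving (⇑((T.toEquiv : Equiv.Perm X) ^ i)) μ μ := by
  obtain ⟨n, rfl | rfl⟩ := i.eq_nat_or_neg
  · rw [zpow_natCast, ← Equiv.Perm.iterate_eq_pow]
    exact hT.iterate n
  · rw [zpow_neg, zpow_natCast, ← inv_pow, ← Equiv.Perm.iterate_eq_pow]
    exact (hT.symm T).iterate n

lemma comap_le_comap_of_eq_comp {X ι κ : Type*} {p : X → ι} {q : X → κ}
    (h : ∃ g : κ → ι, p = g ∘ q) : MeasurableSpace.comap p ⊤ ≤ MeasurableSpace.comap q ⊤ := by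
  obtain ⟨g, rfl⟩ := h
  rw [← MeasurableSpace.comap_comp]
  exact MeasurableSpace.comap_mono le_top

theorem entropy_refinement_formulas_general {X : Type*} [m0 : MeasurableSpace X] (μ : Measure X)
    [IsFiniteMeasure μ] :
    (∀ {T : X ≃ᵐ X}, MeasurePreserving T μ μ → ∀ {ι κ : Type*} [Fintype ι] [Fintype κ]
      {p : X → ι} {q : X → κ}, Measurable[m0, ⊤] p → Measurable[m0, ⊤] q →
      (∃ g : κ → ι, p = g ∘ q) →
      condPartEntropy μ (partPast T p) p - condPartEntropy μ (partPast T q) p =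
        condPartEntropy μ (MeasurableSpace.comap p ⊤ ⊔ partPast T q) q -
          condPartEntropy μ (partHull T T.symm p ⊔ partPast T q) q) ∧
    (∀ {T : X → X}, Measurable T → ∀ {n : ℕ} {ι : ℕ → Type*} [∀ i, Fintype (ι i)]
      {p : ∀ i, X → ι i}, (∀ i ≤ n, Measurable[m0, ⊤] (p i)) →
      (∀ i < n, ∃ g : ι (i + 1) → ι i, p i = g ∘ p (i + 1)) →
      condPartEntropy μ (partPast T (p 0)) (p 0) - condPartEntropy μ (partPast T (p n)) (p 0) ≤
        ∑ i ∈ Finset.range n, (condPartEntropy μ (partPast T (p i)) (p i) -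
          condPartEntropy μ (partPast T (p (i + 1))) (p i))) :=
  ⟨fun hT _ _ _ _ _ _ hp hq h => condPartEntropy_partPast_sub_eq_sub (measurePreserving_zpow hT)
      hp hq (comap_le_comap_of_eq_comp h),
    fun hT _ _ _ _ hp h => condPartEntropy_partPast_sub_le_sum hT hp
      fun i hi => comap_le_comap_of_eq_comp (h i hi)⟩

/-- Pinsker-type formulas: for finite partitions `P₁ ≺ P₂ ≺ ⋯ ≺ P_k`
(each refined by the next), (a)
`H(P₁|P₁⁻) − H(P₁|P₂⁻) = H(P₂|P₁ ∨ P₂⁻) − H(P₂|P₁ᵀ ∨ P₂⁻)`, and (b)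
`H(P₁|P₁⁻) − H(P₁|P_k⁻) ≤ Σ_{i=1}^{k-1} (H(P_i|P_i⁻) − H(P_i|P_{i+1}⁻))`. -/
theorem entropy_refinement_formulas
    {X : Type*} [m0 : MeasurableSpace X] [StandardBorelSpace X]
    (μ : Measure X) [IsProbabilityMeasure μ]
    (T : X ≃ᵐ X) (hT : MeasurePreserving (⇑T) μ μ) :
    (∀ (k₁ k₂ : ℕ) (p₁ : X → Fin k₁) (p₂ : X → Fin k₂),
      Measurable p₁ → Measurable p₂ → (∃ g : Fin k₂ → Fin k₁, p₁ = g ∘ p₂) →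
      condPartEntropy μ (partPast (⇑T) p₁) p₁ - condPartEntropy μ (partPast (⇑T) p₂) p₁ =
        condPartEntropy μ (MeasurableSpace.comap p₁ ⊤ ⊔ partPast (⇑T) p₂) p₂ -
          condPartEntropy μ (partHull (⇑T) (⇑T.symm) p₁ ⊔ partPast (⇑T) p₂) p₂) ∧
    (∀ (k : ℕ), 1 ≤ k → ∀ (m : ℕ → ℕ) (p : ∀ n : ℕ, X → Fin (m n)),
      (∀ i, i < k → Measurable (p i)) →
      (∀ i, i + 1 < k → ∃ g : Fin (m (i + 1)) → Fin (m i), p i = g ∘ p (i + 1)) →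
      condPartEntropy μ (partPast (⇑T) (p 0)) (p 0) -
          condPartEntropy μ (partPast (⇑T) (p (k - 1))) (p 0) ≤
        ∑ i ∈ Finset.range (k - 1),
          (condPartEntropy μ (partPast (⇑T) (p i)) (p i) -
            condPartEntropy μ (partPast (⇑T) (p (i + 1))) (p i))) :=
  ⟨fun _ _ _ _ => (entropy_refinement_formulas_general.{_, 0, 0, 0} μ).1 hT,
    fun _ _ _ _ hp h => (entropy_refinement_formulas_general.{_, 0, 0, 0} μ).2 T.measurable
      (fun i hi => hp i (by lia)) fun i hi => h i (by lia)⟩
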